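/- arXiv:1905.07145 — 2 statements merged into one kernel-verified Lean document; each statement's English description precedes it below -/
import Mathlib

section
/- The continuous online algorithm cCHASE is 2-competitive for the fractional problem cSP: for every β > 0 and every choice of nonnegative cost functions g_1,…,g_T, the fractional schedule x with x_t = (β + Δ(t))/β satisfies CCost(x) ≤ 2·cOpt. -/
/-- The fractional cost `CCost` of a schedule `x`: the operating cost at time
`t` is `(1 − x t)·g_t(0) + x t·g_t(1)`, plus the switching cost
`β·(x t − x (t−1))⁺`. (On binary schedules this is the discrete cost.) -/
noncomputable def cost (T : ℕ) (β : ℝ) (g0 g1 : ℕ → ℝ) (x : ℕ → ℝ) : ℝ :=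
  ∑ t ∈ Finset.Icc 1 T, ((1 - x t) * g0 t + x t * g1 t + β * max (x t - x (t - 1)) 0)

/-- The cumulative cost difference `Δ(t)`, with `Δ(0) = −β` and
`Δ(t) = min{0, max{−β, Δ(t−1) + (g_t(0) − g_t(1))}}`. -/
noncomputable def Δfun (β : ℝ) (g0 g1 : ℕ → ℝ) : ℕ → ℝ
  | 0 => -β
  | t + 1 => min 0 (max (-β) (Δfun β g0 g1 t + (g0 (t + 1) - g1 (t + 1))))

/-- The fractional offline optimal value `cOpt` of problem cSP: the infimum of
`CCost` over all fractional schedules in `[0,1]` starting at `0`. -/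
noncomputable def copt (T : ℕ) (β : ℝ) (g0 g1 : ℕ → ℝ) : ℝ :=
  sInf {c : ℝ | ∃ x : ℕ → ℝ, (∀ t, 0 ≤ x t ∧ x t ≤ 1) ∧ x 0 = 0 ∧ c = cost T β g0 g1 x}

lemma step_aux (β a a' y y' p q : ℝ) (hβ : 0 < β) (hp : 0 ≤ p) (hq : 0 ≤ q)
    (ha : 0 ≤ a) (ha1 : a ≤ 1) (hy0 : 0 ≤ y') (hy1 : y' ≤ 1)
    (h : β * (a' - a) = p - q ∨ (a' = 1 ∧ β * (1 - a) ≤ p - q) ∨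
      (a' = 0 ∧ p - q ≤ - (β * a))) :
    (1 - a') * p + a' * q + β * max (a' - a) 0 + β * (a' ^ 2 / 2 + 2 * y' * (1 - a'))
      ≤ 2 * ((1 - y') * p + y' * q + β * max (y' - y) 0)
        + β * (a ^ 2 / 2 + 2 * y * (1 - a)) := by
  have hm : 2 * β * ((y' - y) * (1 - a)) ≤ 2 * β * max (y' - y) 0 := by
    apply mul_le_mul_of_nonneg_left _ (by linarith)
    calc (y' - y) * (1 - a) ≤ max (y' - y) 0 * (1 - a) :=
          mul_le_mul_of_nonneg_right (le_max_left _ _) (by linarith)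
      _ ≤ max (y' - y) 0 * 1 :=
          mul_le_mul_of_nonneg_left (by linarith) (le_max_right _ _)
      _ = _ := mul_one _
  suffices hs : (1 - a') * p + a' * q + β * max (a' - a) 0 + β * (a' ^ 2 / 2 - a ^ 2 / 2)
      - 2 * β * y' * (a' - a) ≤ 2 * ((1 - y') * p + y' * q) by nlinarith
  rcases h with h | ⟨rfl, h⟩ | ⟨rfl, h⟩
  · have hsq : 0 ≤ β * (a' - a) ^ 2 := by positivity
    rcases le_total 0 (a' - a) with hs | hs
    · rw [max_eq_left hs]
      obtain rfl : p = q + β * (a' - a) := by linarith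
      nlinarith
    · rw [max_eq_right hs]
      obtain rfl : q = p - β * (a' - a) := by linarith
      nlinarith
  · rw [max_eq_left (by linarith)]
    have h1 := mul_nonneg (sub_nonneg.2 hy1) (sub_nonneg.2 h)
    have h2 : 0 ≤ β * (1 - a) ^ 2 := by positivity
    nlinarith
  · rw [max_eq_right (by linarith)]
    have h1 := mul_nonneg hy0 (sub_nonneg.2 h)
    have h2 : 0 ≤ β * a ^ 2 := by positivity
    nlinarith

lemma delta_bd (β : ℝ) (hβ : 0 < β) (g0 g1 : ℕ → ℝ) (t : ℕ) :
    -β ≤ Δfun β g0 g1 t ∧ Δfun β g0 g1 t ≤ 0 := by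
  cases t with
  | zero => simp [Δfun, hβ.le]
  | succ t => simp [Δfun, hβ.le]

lemma main_aux (β : ℝ) (hβ : 0 < β) (g0 g1 : ℕ → ℝ) (y : ℕ → ℝ)
    (hy : ∀ t, 0 ≤ y t ∧ y t ≤ 1) (hy0 : y 0 = 0) (T : ℕ)
    (hg0 : ∀ t, 1 ≤ t → t ≤ T → 0 ≤ g0 t) (hg1 : ∀ t, 1 ≤ t → t ≤ T → 0 ≤ g1 t) :
    cost T β g0 g1 (fun t => (β + Δfun β g0 g1 t) / β)
      + β * (((β + Δfun β g0 g1 T) / β) ^ 2 / 2 + 2 * y T * (1 - (β + Δfun β g0 g1 T) / β))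
      ≤ 2 * cost T β g0 g1 y := by
  induction T with
  | zero => simp [cost, Δfun, hy0]
  | succ n ih =>
    have ih := ih (fun t h1 h2 => hg0 t h1 (by omega)) (fun t h1 h2 => hg1 t h1 (by omega))
    unfold cost at ih ⊢
    rw [Finset.sum_Icc_succ_top (by omega), Finset.sum_Icc_succ_top (by omega)]
    have hb := delta_bd β hβ g0 g1 n
    have key := step_aux β ((β + Δfun β g0 g1 n) / β) ((β + Δfun β g0 g1 (n+1)) / β)
      (y n) (y (n+1)) (g0 (n+1)) (g1 (n+1)) hβ (hg0 _ (by omega) le_rfl) (hg1 _ (by omega) le_rfl)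
      (div_nonneg (by linarith) hβ.le) ((div_le_one hβ).2 (by linarith)) (hy _).1 (hy _).2 (by
        have e : Δfun β g0 g1 (n+1)
          = min 0 (max (-β) (Δfun β g0 g1 n + (g0 (n + 1) - g1 (n + 1)))) := rfl
        have hne := hβ.ne'
        have e0 : β * ((β + Δfun β g0 g1 n) / β) = β + Δfun β g0 g1 n := by field_simp
        have e1 : β * ((β + Δfun β g0 g1 (n+1)) / β) = β + Δfun β g0 g1 (n+1) := by field_simp
        rw [mul_sub, mul_sub, e0, e1]
        rcases le_total (Δfun β g0 g1 n + (g0 (n + 1) - g1 (n + 1))) (-β) with h | h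
        · right; right
          rw [max_eq_left h, min_eq_right (by linarith)] at e
          rw [e]
          exact ⟨by simp, by linarith⟩
        · rw [max_eq_right h] at e
          rcases le_total (Δfun β g0 g1 n + (g0 (n + 1) - g1 (n + 1))) 0 with h' | h'
          · left
            rw [min_eq_right h'] at e
            rw [e]; ring
          · right; left
            rw [min_eq_left h'] at e
            rw [e]
            exact ⟨by simp [hne], by linarith⟩)
    simp only [Nat.add_sub_cancel]
    linarith

theorem stmt5 (T : ℕ) (β : ℝ) (hβ : 0 < β) (g0 g1 : ℕ → ℝ)
    (hg0 : ∀ t, 1 ≤ t → t ≤ T → 0 ≤ g0 t) (hg1 : ∀ t, 1 ≤ t → t ≤ T → 0 ≤ g1 t) :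
    cost T β g0 g1 (fun t => (β + Δfun β g0 g1 t) / β) ≤ 2 * copt T β g0 g1 := by
  have : cost T β g0 g1 (fun t => (β + Δfun β g0 g1 t) / β) / 2 ≤ copt T β g0 g1 := by
    apply le_csInf
    · exact ⟨_, fun _ => 0, by simp, rfl, rfl⟩
    · rintro c ⟨y, hy, hy0, rfl⟩
      have h := main_aux β hβ g0 g1 y hy hy0 T hg0 hg1
      have hb := delta_bd β hβ g0 g1 T
      have h1 : (β + Δfun β g0 g1 T) / β ≤ 1 := (div_le_one hβ).2 (by linarith)
      have h2 : 0 ≤ β * (((β + Δfun β g0 g1 T) / β) ^ 2 / 2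
          + 2 * y T * (1 - (β + Δfun β g0 g1 T) / β)) := by
        have := mul_nonneg (hy T).1 (sub_nonneg.2 h1)
        apply mul_nonneg hβ.le
        nlinarith [sq_nonneg ((β + Δfun β g0 g1 T) / β)]
      linarith
  linarith
end

section
/- No deterministic online algorithm for the fractional problem cSP has competitive ratio smaller than 2: for every deterministic online algorithm A producing fractional states x_t ∈ [0,1] (each x_t depending only on β and the prefix g_1,…,g_t, with x_0 = 0), every real c < 2 and every real γ, there exist T ∈ ℕ, β > 0 and nonnegative cost functions g_1,…,g_T such that CCost_A > c·cOpt + γ. Consequently the expected competitive ratio of every randomized online algorithm for problem SP is at least 2. -/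
noncomputable def G0 (e : ℝ) (d : ℕ → Bool) (t : ℕ) : ℝ := if d t then e else 0
noncomputable def G1 (e : ℝ) (d : ℕ → Bool) (t : ℕ) : ℝ := if d t then 0 else e

noncomputable def thr (n k : ℕ) : ℝ := (k : ℝ) / n + (1 / (n : ℝ)) ^ 2 * (1 - 2 * ((k : ℝ) / n))

noncomputable def adv (A : ℝ → (ℕ → ℝ) → (ℕ → ℝ) → ℕ → ℝ) (n : ℕ) : ℕ → (ℕ → Bool) × ℕ
  | 0 => (fun _ => false, 0)
  | t + 1 =>
    let p := adv A n t
    let r : Bool := @decide (A 1 (G0 (1 / n) p.1) (G1 (1 / n) p.1) t < thr n p.2) (Classical.dec _)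
    (Function.update p.1 (t + 1) r, if r then min n (p.2 + 1) else p.2 - 1)

lemma adv_stable (A : ℝ → (ℕ → ℝ) → (ℕ → ℝ) → ℕ → ℝ) (n t s : ℕ) :
    (adv A n (t + s)).1 t = (adv A n t).1 t := by
  induction s with
  | zero => rfl
  | succ s ih =>
    rw [← ih, ← add_assoc]
    simp only [adv]
    rw [Function.update_of_ne (by omega)]

lemma exists_adv (A : ℝ → (ℕ → ℝ) → (ℕ → ℝ) → ℕ → ℝ)
    (hOnline : ∀ β g0 g1 g0' g1' t,
      (∀ τ, τ ≤ t → g0 τ = g0' τ ∧ g1 τ = g1' τ) →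
      A β g0 g1 t = A β g0' g1' t) (n : ℕ) :
    ∃ (d : ℕ → Bool) (k : ℕ → ℕ), k 0 = 0 ∧
      ∀ t, (d (t + 1) = true ∧ A 1 (G0 (1 / n) d) (G1 (1 / n) d) t < thr n (k t) ∧
            k (t + 1) = min n (k t + 1)) ∨
          (d (t + 1) = false ∧ thr n (k t) ≤ A 1 (G0 (1 / n) d) (G1 (1 / n) d) t ∧
            k (t + 1) = k t - 1) := by
  refine ⟨fun t => (adv A n t).1 t, fun t => (adv A n t).2, rfl, fun t => ?_⟩
  have h : A 1 (G0 (1 / n) (fun t => (adv A n t).1 t)) (G1 (1 / n) (fun t => (adv A n t).1 t)) t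
      = A 1 (G0 (1 / n) (adv A n t).1) (G1 (1 / n) (adv A n t).1) t := by
    apply hOnline
    intro τ hτ
    obtain ⟨s, rfl⟩ := Nat.exists_eq_add_of_le hτ
    simp [G0, G1, adv_stable]
  rw [h]
  by_cases hc : A 1 (G0 (1 / n) (adv A n t).1) (G1 (1 / n) (adv A n t).1) t < thr n (adv A n t).2
  · left
    refine ⟨?_, hc, ?_⟩
    · simp only [adv, Function.update_self]; simpa using hc
    · simp only [adv]; rw [if_pos (by simpa using hc)]
  · right
    refine ⟨?_, not_lt.mp hc, ?_⟩
    · simp only [adv, Function.update_self]; simpa using hc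
    · simp only [adv]; rw [if_neg (by simpa using hc)]

lemma cost_succ (T : ℕ) (β : ℝ) (g0 g1 x : ℕ → ℝ) :
    cost (T + 1) β g0 g1 x = cost T β g0 g1 x +
      ((1 - x (T + 1)) * g0 (T + 1) + x (T + 1) * g1 (T + 1) + β * max (x (T + 1) - x T) 0) := by
  unfold cost
  rw [Finset.sum_Icc_succ_top (by omega)]
  simp

lemma cost_congr (T : ℕ) (β : ℝ) (g0 g1 x y : ℕ → ℝ) (h : ∀ t ≤ T, x t = y t) :
    cost T β g0 g1 x = cost T β g0 g1 y := by
  unfold cost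
  apply Finset.sum_congr rfl
  intro t ht
  rw [Finset.mem_Icc] at ht
  rw [h t ht.2, h (t - 1) (by omega)]

def Sched (x : ℕ → ℝ) : Prop := (∀ t, 0 ≤ x t ∧ x t ≤ 1) ∧ x 0 = 0

lemma extend (T : ℕ) (g0 g1 x : ℕ → ℝ) (hx : Sched x) (v : ℝ) (hv : 0 ≤ v ∧ v ≤ 1) :
    ∃ y, Sched y ∧ y (T + 1) = v ∧ cost (T + 1) 1 g0 g1 y = cost T 1 g0 g1 x +
      ((1 - v) * g0 (T + 1) + v * g1 (T + 1) + max (v - x T) 0) := by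
  refine ⟨Function.update x (T + 1) v, ⟨fun t => ?_, ?_⟩, by simp, ?_⟩
  · by_cases h : t = T + 1
    · subst h; simpa using hv
    · rw [Function.update_of_ne h]; exact hx.1 t
  · rw [Function.update_of_ne (by omega)]; exact hx.2
  · rw [cost_succ, cost_congr T 1 g0 g1 _ x]
    · rw [Function.update_self, Function.update_of_ne (by omega)]; ring
    · intro t ht; rw [Function.update_of_ne (by omega)]

/-- one step of the offline bound: `u` is the optimal value, `p` the bound for being at one. -/
lemma ext0 (T : ℕ) (g0 g1 : ℕ → ℝ) (u : ℝ)
    (h : ∃ x, Sched x ∧ cost T 1 g0 g1 x ≤ u) :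
    ∃ x, Sched x ∧ x (T + 1) = 0 ∧ cost (T + 1) 1 g0 g1 x ≤ u + g0 (T + 1) := by
  obtain ⟨x, hx, hu⟩ := h
  obtain ⟨y, hy, h0, hc⟩ := extend T g0 g1 x hx 0 (by norm_num)
  refine ⟨y, hy, h0, ?_⟩
  rw [hc, max_eq_right (by linarith [(hx.1 T).1])]
  linarith

lemma ext1 (T : ℕ) (g0 g1 : ℕ → ℝ) (u : ℝ)
    (h : ∃ x, Sched x ∧ cost T 1 g0 g1 x + (1 - x T) ≤ u) :
    ∃ x, Sched x ∧ x (T + 1) = 1 ∧ cost (T + 1) 1 g0 g1 x ≤ u + g1 (T + 1) := by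
  obtain ⟨x, hx, hu⟩ := h
  obtain ⟨y, hy, h0, hc⟩ := extend T g0 g1 x hx 1 (by norm_num)
  refine ⟨y, hy, h0, ?_⟩
  rw [hc, max_eq_left (by linarith [(hx.1 T).2])]
  linarith

lemma copt_le (T : ℕ) (g0 g1 : ℕ → ℝ) (h0 : ∀ t, 0 ≤ g0 t) (h1 : ∀ t, 0 ≤ g1 t) (u : ℝ)
    (h : ∃ x, Sched x ∧ cost T 1 g0 g1 x ≤ u) : 0 ≤ copt T 1 g0 g1 ∧ copt T 1 g0 g1 ≤ u := by
  have hnn : ∀ b ∈ {c : ℝ | ∃ x : ℕ → ℝ, (∀ t, 0 ≤ x t ∧ x t ≤ 1) ∧ x 0 = 0 ∧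
      c = cost T 1 g0 g1 x}, 0 ≤ b := by
    rintro b ⟨x, hx, -, rfl⟩
    unfold cost
    apply Finset.sum_nonneg
    intro t _
    have := mul_nonneg (sub_nonneg.2 (hx t).2) (h0 t)
    have := mul_nonneg (hx t).1 (h1 t)
    have := le_max_right (x t - x (t - 1)) 0
    linarith
  refine ⟨Real.sInf_nonneg hnn, ?_⟩
  obtain ⟨x, hx, hu⟩ := h
  exact (csInf_le ⟨0, hnn⟩ ⟨x, hx.1, hx.2, rfl⟩).trans hu

/-- potential -/
noncomputable def Phi (a b : ℝ) : ℝ := b ^ 2 / 2 + max (b - a) 0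

lemma step_up (a a' b δ : ℝ) (hδ0 : 0 < δ) (hδ : δ ≤ 1) (hb0 : 0 ≤ b)
    (h : a < b + δ ^ 2 * (1 - 2 * b)) :
    2 * δ - 3 / 2 * δ ^ 2 + Phi a b ≤ (1 - a') * δ + max (a' - a) 0 + Phi a' (b + δ) := by
  unfold Phi
  have h2 : a ≤ b + δ ^ 2 := by nlinarith [mul_nonneg (sq_nonneg δ) hb0]
  have h3 : δ ^ 2 ≤ δ := by nlinarith
  have e1 : (a' - a) * 1 ≤ max (a' - a) 0 := by simp
  have e2 := le_max_right (a' - a) 0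
  have e3 := le_max_left (b + δ - a') 0
  have e4 := le_max_right (b + δ - a') 0
  have e5 : max (b - a) 0 ≤ b + δ ^ 2 - a := by
    apply max_le <;> nlinarith
  rcases le_total a' (b + δ) with h4 | h4
  · nlinarith [mul_nonneg hδ0.le (sub_nonneg.2 h4)]
  · nlinarith [mul_nonneg (sub_nonneg.2 hδ) (sub_nonneg.2 h4)]

lemma step_down (a a' b δ : ℝ) (hδ0 : 0 < δ) (hδ : δ ≤ 1) (hb1 : b ≤ 1)
    (h : b + δ ^ 2 * (1 - 2 * b) ≤ a) :
    - (3 / 2 * δ ^ 2) + Phi a b ≤ a' * δ + max (a' - a) 0 + Phi a' (b - δ) := by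
  unfold Phi
  have h2 : b - δ ^ 2 ≤ a := by nlinarith [mul_nonneg (sq_nonneg δ) (sub_nonneg.2 hb1)]
  have e2 := le_max_right (a' - a) 0
  have e3 := le_max_left (b - δ - a') 0
  have e4 := le_max_right (b - δ - a') 0
  have e5 : max (b - a) 0 ≤ δ ^ 2 := by
    apply max_le <;> nlinarith
  rcases le_total a' (b - δ) with h4 | h4
  · nlinarith [mul_nonneg (sub_nonneg.2 hδ) (sub_nonneg.2 h4)]
  · nlinarith [mul_nonneg hδ0.le (sub_nonneg.2 h4)]

lemma stuck_up (a a' δ : ℝ) (ha : a ≤ 1) (ha' : a' ≤ 1) :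
    (1 - a') * δ + Phi a 1 ≤ (1 - a') * δ + max (a' - a) 0 + Phi a' 1 := by
  unfold Phi
  have e1 := le_max_left (a' - a) 0
  rw [max_eq_left (by linarith : 0 ≤ 1 - a), max_eq_left (by linarith : 0 ≤ 1 - a')]
  linarith

lemma stuck_down (a a' δ : ℝ) (ha : 0 ≤ a) (ha' : 0 ≤ a') :
    a' * δ + Phi a 0 ≤ a' * δ + max (a' - a) 0 + Phi a' 0 := by
  unfold Phi
  have e1 := le_max_right (a' - a) 0
  rw [max_eq_right (by linarith : 0 - a ≤ 0), max_eq_right (by linarith : 0 - a' ≤ 0)]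
  linarith

/-- the next step is stuck -/
noncomputable def stk (n k : ℕ) (d : Bool) : ℝ :=
  if (d = true ∧ k = n) ∨ (d = false ∧ k = 0) then 1 else 0

lemma stk_le (n k : ℕ) (d : Bool) : stk n k d ≤ 1 := by unfold stk; split_ifs <;> norm_num

lemma main_inv (n : ℕ) (hn : 0 < n) (d : ℕ → Bool) (k : ℕ → ℕ) (a : ℕ → ℝ)
    (ha : ∀ t, 0 ≤ a t ∧ a t ≤ 1) (ha0 : a 0 = 0) (hk0 : k 0 = 0)
    (hd : ∀ t, (d (t + 1) = true ∧ a t < thr n (k t) ∧ k (t + 1) = min n (k t + 1)) ∨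
          (d (t + 1) = false ∧ thr n (k t) ≤ a t ∧ k (t + 1) = k t - 1)) (T : ℕ) :
    ∃ U S : ℝ, 0 ≤ U ∧ 0 ≤ S ∧ k T ≤ n ∧ (T : ℝ) = S + 2 * U - k T ∧
      (∃ x, Sched x ∧ cost T 1 (G0 (1 / n) d) (G1 (1 / n) d) x ≤ U * (1 / n)) ∧
      (∃ x, Sched x ∧ cost T 1 (G0 (1 / n) d) (G1 (1 / n) d) x + (1 - x T)
        ≤ U * (1 / n) + (1 - k T * (1 / n))) ∧
      2 * (1 / n) * U + (1 / n : ℝ) ^ 3 * (S + stk n (k T) (d (T + 1)) - 1)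
        - 5 / 2 * (1 / n : ℝ) ^ 2 * (2 * U - k T)
        ≤ cost T 1 (G0 (1 / n) d) (G1 (1 / n) d) a + Phi (a T) (k T * (1 / n)) := by
  obtain ⟨δ, hδ⟩ : ∃ δ : ℝ, δ = 1 / n := ⟨_, rfl⟩
  have hn' : (1 : ℝ) ≤ n := by exact_mod_cast hn
  have hδ0 : 0 < δ := by rw [hδ]; positivity
  have hδ1 : δ ≤ 1 := by rw [hδ]; exact (div_le_one (by positivity)).2 hn'
  have hnδ : (n : ℝ) * δ = 1 := by rw [hδ]; field_simp
  have hthr : ∀ j, thr n j = j * δ + δ ^ 2 * (1 - 2 * (j * δ)) := by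
    intro j; unfold thr; rw [hδ]; ring
  rw [← hδ]
  simp only [hthr] at hd
  have d3 : 0 < δ ^ 3 := by positivity
  have d32 : δ ^ 3 ≤ δ ^ 2 := by nlinarith [sq_nonneg δ]
  induction T with
  | zero =>
    refine ⟨0, 0, le_rfl, le_rfl, by omega, by simp [hk0], ⟨fun _ => 0, ?_, ?_⟩,
      ⟨fun _ => 0, ?_, ?_⟩, ?_⟩
    · exact ⟨fun t => by norm_num, rfl⟩
    · simp [cost]
    · exact ⟨fun t => by norm_num, rfl⟩
    · simp [cost, hk0]
    · have := stk_le n (k 0) (d 1)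
      simp only [cost, hk0, ha0, Phi] at *
      simp
      nlinarith
  | succ T ih =>
    obtain ⟨U, S, hU, hS, hkn, hT, hx0, hx1, hinv⟩ := ih
    have hI := stk_le n (k (T + 1)) (d (T + 1 + 1))
    have hJ := mul_le_mul_of_nonneg_left hI d3.le
    have hb0 : 0 ≤ (k T : ℝ) * δ := by positivity
    have hb1 : (k T : ℝ) * δ ≤ 1 := by
      rw [← hnδ]; exact mul_le_mul_of_nonneg_right (by exact_mod_cast hkn) hδ0.le
    have e0 := ext0 T _ _ _ hx0
    have e1 := ext1 T _ _ _ hx1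
    have hcs := cost_succ T 1 (G0 δ d) (G1 δ d) a
    rcases hd T with ⟨h1, h2, h3⟩ | ⟨h1, h2, h3⟩
    · have g0 : G0 δ d (T + 1) = δ := by simp [G0, h1]
      have g1 : G1 δ d (T + 1) = 0 := by simp [G1, h1]
      rw [g0] at e0 hcs
      rw [g1] at e1 hcs
      by_cases hk : k T = n
      · have hk' : k (T + 1) = n := by omega
        have hs : stk n (k T) (d (T + 1)) = 1 := by simp [stk, hk, h1]
        obtain ⟨x, hx, hxv, hxc⟩ := e1
        rw [hk, hnδ] at hxc
        refine ⟨U, S + 1, hU, by linarith, by omega, ?_, ⟨x, hx, by linarith⟩,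
          ⟨x, hx, ?_⟩, ?_⟩
        · push_cast; rw [hT, hk, hk']; ring
        · rw [hk', hnδ, hxv]; linarith
        · have hst := stuck_up (a T) (a (T + 1)) δ (ha T).2 (ha (T + 1)).2
          have key : δ ^ 3 * stk n (k (T + 1)) (d (T + 1 + 1)) ≤ (1 - a (T + 1)) * δ := by
            have hpos : 0 ≤ (1 - a (T + 1)) * δ := mul_nonneg (by linarith [(ha (T+1)).2]) hδ0.le
            unfold stk
            split_ifs with hh
            · rcases hh with ⟨q1, q2⟩ | ⟨q1, q2⟩
              · rcases hd (T + 1) with ⟨r1, r2, r3⟩ | ⟨r1, r2, r3⟩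
                · rw [hk', hnδ] at r2
                  nlinarith
                · simp [r1] at q1
              · omega
            · simpa using hpos
          rw [hs, hk, hnδ] at hinv
          rw [hcs, hk', hnδ]
          rw [hk'] at key
          linarith
      · have hk' : k (T + 1) = k T + 1 := by omega
        have hs : stk n (k T) (d (T + 1)) = 0 := by simp [stk, hk, h1]
        obtain ⟨x, hx, hxv, hxc⟩ := e0
        obtain ⟨y, hy, hyv, hyc⟩ := e1
        refine ⟨U + 1, S, by linarith, hS, by omega, ?_, ⟨x, hx, by linarith⟩,
          ⟨y, hy, ?_⟩, ?_⟩
        · push_cast; rw [hT, hk']; push_cast; ring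
        · rw [hk', hyv]; push_cast; linarith
        · have hst := step_up (a T) (a (T + 1)) _ δ hδ0 hδ1 hb0 h2
          rw [hs] at hinv
          rw [hcs]
          have : ((k (T + 1) : ℕ) : ℝ) = k T + 1 := by rw [hk']; push_cast; ring
          rw [this, show ((k T : ℝ) + 1) * δ = k T * δ + δ by ring]
          linarith
    · have g0 : G0 δ d (T + 1) = 0 := by simp [G0, h1]
      have g1 : G1 δ d (T + 1) = δ := by simp [G1, h1]
      rw [g0] at e0 hcs
      rw [g1] at e1 hcs
      obtain ⟨x, hx, hxv, hxc⟩ := e0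
      by_cases hk : k T = 0
      · have hk' : k (T + 1) = 0 := by omega
        have hs : stk n (k T) (d (T + 1)) = 1 := by simp [stk, hk, h1]
        refine ⟨U, S + 1, hU, by linarith, by omega, ?_, ⟨x, hx, by linarith⟩,
          ⟨x, hx, ?_⟩, ?_⟩
        · push_cast; rw [hT, hk, hk']; ring
        · rw [hk', hxv]; push_cast; linarith
        · have hst := stuck_down (a T) (a (T + 1)) δ (ha T).1 (ha (T + 1)).1
          have key : δ ^ 3 * stk n (k (T + 1)) (d (T + 1 + 1)) ≤ a (T + 1) * δ := by
            have hpos : 0 ≤ a (T + 1) * δ := mul_nonneg (ha (T+1)).1 hδ0.le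
            unfold stk
            split_ifs with hh
            · rcases hh with ⟨q1, q2⟩ | ⟨q1, q2⟩
              · omega
              · rcases hd (T + 1) with ⟨r1, r2, r3⟩ | ⟨r1, r2, r3⟩
                · simp [r1] at q1
                · rw [hk'] at r2
                  push_cast at r2
                  nlinarith
            · simpa using hpos
          rw [hs, hk] at hinv
          rw [hcs, hk']
          rw [hk'] at key
          push_cast at hinv ⊢
          rw [zero_mul] at hinv ⊢
          linarith
      · have hk' : k T = k (T + 1) + 1 := by omega
        have hs : stk n (k T) (d (T + 1)) = 0 := by simp [stk, hk, h1]
        obtain ⟨y, hy, hyv, hyc⟩ := e1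
        have hc : (k (T + 1) : ℝ) = k T - 1 := by rw [hk']; push_cast; ring
        refine ⟨U, S, hU, hS, by omega, ?_, ⟨x, hx, by linarith⟩,
          ⟨y, hy, ?_⟩, ?_⟩
        · push_cast; rw [hT, hc]; ring
        · rw [hc, hyv]; linarith
        · have hst := step_down (a T) (a (T + 1)) _ δ hδ0 hδ1 hb1 h2
          rw [hs] at hinv
          rw [hcs, hc, show ((k T : ℝ) - 1) * δ = k T * δ - δ by ring]
          linarith

/-- no deterministic online algorithm for the fractional problem
cSP has competitive ratio smaller than 2. Here `A β g0 g1 t` is the fractional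
state chosen at time `t`; the algorithm takes values in `[0,1]`, starts at `0`,
and is online (its decision at time `t` only depends on `β` and the prefix
`g_1, …, g_t`). -/
theorem stmt14 (A : ℝ → (ℕ → ℝ) → (ℕ → ℝ) → ℕ → ℝ)
    (hRange : ∀ β g0 g1 t, 0 ≤ A β g0 g1 t ∧ A β g0 g1 t ≤ 1)
    (hInit : ∀ β g0 g1, A β g0 g1 0 = 0)
    (hOnline : ∀ β g0 g1 g0' g1' t,
      (∀ τ, τ ≤ t → g0 τ = g0' τ ∧ g1 τ = g1' τ) →
      A β g0 g1 t = A β g0' g1' t)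
    (c γ : ℝ) (hc : c < 2) :
    ∃ (T : ℕ) (β : ℝ), 0 < β ∧ ∃ g0 g1 : ℕ → ℝ,
      (∀ t, 1 ≤ t → t ≤ T → 0 ≤ g0 t ∧ 0 ≤ g1 t) ∧
      cost T β g0 g1 (A β g0 g1) > c * copt T β g0 g1 + γ := by
  obtain ⟨c', hcc, hc1, hc2⟩ : ∃ c' : ℝ, c ≤ c' ∧ 1 ≤ c' ∧ c' < 2 :=
    ⟨max c 1, le_max_left _ _, le_max_right _ _, max_lt hc (by norm_num)⟩
  obtain ⟨n, hn⟩ := exists_nat_gt (10 / (2 - c'))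
  have hpos : 0 < 2 - c' := by linarith
  have hnR : (0 : ℝ) < n := lt_trans (by positivity) hn
  have hn0 : 0 < n := by exact_mod_cast hnR
  obtain ⟨d, k, hk0, hd⟩ := exists_adv A hOnline n
  have hinv := main_inv n hn0 d k (A 1 (G0 (1 / n) d) (G1 (1 / n) d)) (hRange _ _ _)
    (hInit _ _ _) hk0 hd
  obtain ⟨δ, hδ⟩ : ∃ δ : ℝ, δ = 1 / n := ⟨_, rfl⟩
  have hn' : (1 : ℝ) ≤ n := by exact_mod_cast hn0
  have hδ0 : 0 < δ := by rw [hδ]; positivity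
  have hδ1 : δ ≤ 1 := by rw [hδ]; exact (div_le_one (by positivity)).2 hn'
  have hnδ : (n : ℝ) * δ = 1 := by rw [hδ]; field_simp
  have h10 : 10 * δ < 2 - c' := by
    rw [div_lt_iff₀ hpos] at hn
    rw [hδ, mul_one_div, div_lt_iff₀ hnR]; linarith
  rw [← hδ] at hinv
  obtain ⟨ρ, hρ0, hρ1, hρ2⟩ : ∃ ρ : ℝ, 0 < ρ ∧ 2 * ρ ≤ (2 - c') / 2 * δ ∧ ρ ≤ δ ^ 3 := by
    refine ⟨min ((2 - c') / 4 * δ) (δ ^ 3), by positivity, ?_, min_le_right _ _⟩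
    linarith [min_le_left ((2 - c') / 4 * δ) (δ ^ 3)]
  obtain ⟨T, hT⟩ := exists_nat_gt ((γ + 5 / 2) / ρ)
  rw [div_lt_iff₀ hρ0] at hT
  have hg0 : ∀ t, 0 ≤ G0 δ d t := by intro t; unfold G0; split_ifs <;> linarith
  have hg1 : ∀ t, 0 ≤ G1 δ d t := by intro t; unfold G1; split_ifs <;> linarith
  refine ⟨T, 1, one_pos, G0 δ d, G1 δ d, fun t _ _ => ⟨hg0 t, hg1 t⟩, ?_⟩
  obtain ⟨U, S, hU, hS, hkn, hTe, hx0, -, hA⟩ := hinv T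
  obtain ⟨o0, o1⟩ := copt_le T _ _ hg0 hg1 _ hx0
  have hb0 : 0 ≤ (k T : ℝ) * δ := by positivity
  have hb1 : (k T : ℝ) * δ ≤ 1 := by
    rw [← hnδ]; exact mul_le_mul_of_nonneg_right (by exact_mod_cast hkn) hδ0.le
  have hPhi : Phi (A 1 (G0 δ d) (G1 δ d) T) (k T * δ) ≤ 3 / 2 := by
    unfold Phi
    have : max (k T * δ - A 1 (G0 δ d) (G1 δ d) T) 0 ≤ 1 :=
      max_le (by linarith [(hRange 1 (G0 δ d) (G1 δ d) T).1]) (by norm_num)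
    nlinarith
  have hstk : 0 ≤ stk n (k T) (d (T + 1)) := by unfold stk; split_ifs <;> norm_num
  have d3 : 0 < δ ^ 3 := by positivity
  have d31 : δ ^ 3 ≤ 1 := pow_le_one₀ hδ0.le hδ1
  have p1 := mul_nonneg d3.le hstk
  have p2 : c * copt T 1 (G0 δ d) (G1 δ d) ≤ c' * (U * δ) :=
    (mul_le_mul_of_nonneg_right hcc o0).trans (mul_le_mul_of_nonneg_left o1 (by linarith))
  have p3 : 0 ≤ δ ^ 2 * k T := by positivity
  have p4 : 10 * δ * (U * δ) ≤ (2 - c') * (U * δ) :=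
    mul_le_mul_of_nonneg_right h10.le (by positivity)
  have p5 := mul_le_mul_of_nonneg_right hρ1 hU
  have p6 := mul_le_mul_of_nonneg_right hρ2 hS
  have p7 : T * ρ ≤ 2 * ρ * U + ρ * S := by
    rw [hTe]; nlinarith [mul_nonneg hρ0.le (Nat.cast_nonneg (α := ℝ) (k T))]
  linarith
end
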